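/- Let n ≥ 7 and (α₁,…,α₆) ∈ ℂ⁶, and let L denote the left-multiplication operator L_{e₁}(z) = e₁·z on the algebra A(α₁,α₂,α₃,α₄,α₅,α₆). Then L is nilpotent with Jordan type (n−3, 2, 1); equivalently, dim ker L^k = min(k, n−3) + min(k, 2) + 1 for every integer k ≥ 1. In particular L^{n−3} = 0, L^{n−4} ≠ 0 and dim ker L = 3. -/

import Mathlib

/-!
Left multiplication by `e₁` sends basis vectors to basis vectors or to `0`, along the three chains
`e₁ ↦ e₂ ↦ ⋯ ↦ e_{n-3} ↦ 0`, `e_{n-2} ↦ e_{n-1} ↦ 0` and `eₙ ↦ 0`; the parameters `αᵢ` play no role,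
since `e₁` is neither `e_{n-2}` nor `eₙ`. In coordinates this is a truncated shift
(`Amul_e1_apply`), and so are its powers (`leftMul_pow_apply`). Hence `ker L^k` is the coordinate
subspace cut out by `z j = 0` for those `j` whose basis vector survives `k` steps
(`mem_ker_leftMul_pow`), and its dimension is the number of remaining coordinates.
-/


/-- The `m`-th standard basis vector of `Fin n → ℂ` (0-based index). -/
noncomputable def bvec (n : ℕ) (m : ℕ) (h : m < n) : Fin n → ℂ :=
  Pi.single (⟨m, h⟩ : Fin n) (1 : ℂ)

/-- Structure constants of the algebra `A(α₁,…,α₆)` on basis vectors.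
Index `i : Fin n` represents the basis vector `e_{i+1}` of the paper. -/
noncomputable def Abasis (n : ℕ) (α : Fin 6 → ℂ) (i j : Fin n) : Fin n → ℂ :=
  if h : i.1 + j.1 + 2 ≤ n - 3 then
    bvec n (i.1 + j.1 + 1) (by omega)
  else if i.1 = 0 ∧ j.1 = n - 3 then
    bvec n (n - 2) (by have := i.2; omega)
  else if i.1 = n - 3 ∧ j.1 = 0 then
    α 0 • bvec n (n - 2) (by have := i.2; omega)
  else if i.1 = n - 3 ∧ j.1 = n - 3 then
    α 1 • bvec n (n - 2) (by have := i.2; omega)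
  else if i.1 = n - 3 ∧ j.1 = n - 1 then
    α 2 • bvec n (n - 2) (by have := i.2; omega)
  else if i.1 = n - 1 ∧ j.1 = 0 then
    α 3 • bvec n (n - 2) (by have := i.2; omega)
  else if i.1 = n - 1 ∧ j.1 = n - 3 then
    α 4 • bvec n (n - 2) (by have := i.2; omega)
  else if i.1 = n - 1 ∧ j.1 = n - 1 then
    α 5 • bvec n (n - 2) (by have := i.2; omega)
  else 0

/-- The bilinear multiplication of the algebra `A(α₁,…,α₆)` on `Fin n → ℂ`. -/
noncomputable def Amul (n : ℕ) (α : Fin 6 → ℂ) (x y : Fin n → ℂ) : Fin n → ℂ :=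
  ∑ i : Fin n, ∑ j : Fin n, (x i * y j) • Abasis n α i j

/-- `A(α) ≅ A(α')` as non-unital `ℂ`-algebras. -/
def AIso (n : ℕ) (α α' : Fin 6 → ℂ) : Prop :=
  ∃ φ : (Fin n → ℂ) ≃ₗ[ℂ] (Fin n → ℂ),
    ∀ x y : Fin n → ℂ, φ (Amul n α x y) = Amul n α' (φ x) (φ y)

theorem pos_of_seven_le {n : ℕ} (hn : 7 ≤ n) : 0 < n := by omega

theorem Abasis_e1_apply (n : ℕ) (hn : 7 ≤ n) (α : Fin 6 → ℂ) (j m : Fin n) :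
    Abasis n α ⟨0, pos_of_seven_le hn⟩ j m =
      if m.1 = j.1 + 1 ∧ (m.1 ≤ n - 4 ∨ m.1 = n - 2) then 1 else 0 := by
  have hj := j.2
  have hm := m.2
  unfold Abasis
  by_cases h1 : 0 + j.1 + 2 ≤ n - 3
  · rw [dif_pos h1]
    simp only [bvec, Pi.single_apply, Fin.ext_iff]
    exact if_congr (by omega) rfl rfl
  · rw [dif_neg h1]
    by_cases h2 : j.1 = n - 3
    · rw [if_pos ⟨rfl, h2⟩]
      simp only [bvec, Pi.single_apply, Fin.ext_iff]
      exact if_congr (by omega) rfl rfl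
    · rw [if_neg (by simp [h2]), if_neg (by simp; omega), if_neg (by simp; omega),
        if_neg (by simp; omega), if_neg (by simp; omega), if_neg (by simp; omega),
        if_neg (by simp; omega), if_neg (by omega), Pi.zero_apply]

theorem Amul_e1_apply (n : ℕ) (hn : 7 ≤ n) (α : Fin 6 → ℂ) (z : Fin n → ℂ) (m : Fin n) :
    Amul n α (bvec n 0 (pos_of_seven_le hn)) z m =
      if (1 ≤ m.1 ∧ m.1 ≤ n - 4) ∨ m.1 = n - 2 then z ⟨m.1 - 1, by omega⟩ else 0 := by
  have hm := m.2
  have h1 : Amul n α (bvec n 0 (pos_of_seven_le hn)) z m =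
      ∑ j : Fin n, z j * Abasis n α ⟨0, pos_of_seven_le hn⟩ j m := by
    unfold Amul
    rw [Finset.sum_eq_single (⟨0, pos_of_seven_le hn⟩ : Fin n)]
    · simp [bvec]
    · intro i _ hi
      simp [bvec, hi]
    · simp
  rw [h1]
  simp only [Abasis_e1_apply n hn]
  split_ifs with h
  · rw [Finset.sum_eq_single (⟨m.1 - 1, by omega⟩ : Fin n)]
    · rw [if_pos ⟨by simp; omega, by omega⟩, mul_one]
    · intro j _ hj
      rw [if_neg, mul_zero]
      rintro ⟨h2, -⟩
      exact hj (Fin.ext (by simp; omega))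
    · simp
  · refine Finset.sum_eq_zero fun j _ => ?_
    rw [if_neg (by omega), mul_zero]

/-- The left-multiplication operator `L_{e₁}` of the algebra `A(α₁,…,α₆)`. -/
noncomputable def leftMul (n : ℕ) (hn : 7 ≤ n) (α : Fin 6 → ℂ) : Module.End ℂ (Fin n → ℂ) where
  toFun z := Amul n α (bvec n 0 (pos_of_seven_le hn)) z
  map_add' x y := by
    ext m
    simp only [Pi.add_apply, Amul_e1_apply n hn]
    split_ifs <;> simp
  map_smul' c x := by
    ext m
    simp only [Pi.smul_apply, RingHom.id_apply, Amul_e1_apply n hn]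
    split_ifs <;> simp

/-- For `k ≥ 1`, the operator `L^k` shifts coordinates by `k`, keeping only the targets in the
chain `e₁, …, e_{n-3}`, and `e_{n-1}` when `k = 1`. -/
theorem leftMul_pow_apply (n : ℕ) (hn : 7 ≤ n) (α : Fin 6 → ℂ) (k : ℕ) (hk : 1 ≤ k)
    (z : Fin n → ℂ) (m : Fin n) :
    (leftMul n hn α ^ k) z m =
      if (k ≤ m.1 ∧ m.1 ≤ n - 4) ∨ (k = 1 ∧ m.1 = n - 2) then z ⟨m.1 - k, by omega⟩ else 0 := by
  induction k, hk using Nat.le_induction generalizing m with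
  | base =>
    rw [pow_one]
    change Amul n α (bvec n 0 (pos_of_seven_le hn)) z m = _
    simpa using Amul_e1_apply n hn α z m
  | succ k hk ih =>
    have hm := m.2
    rw [pow_succ', Module.End.mul_apply]
    change Amul n α (bvec n 0 (pos_of_seven_le hn)) ((leftMul n hn α ^ k) z) m = _
    rw [Amul_e1_apply n hn, ih]
    split_ifs <;> first | rfl | omega | (congr 1; simp; omega) | (simp at *; omega)

theorem mem_ker_leftMul_pow (n : ℕ) (hn : 7 ≤ n) (α : Fin 6 → ℂ) (k : ℕ) (hk : 1 ≤ k)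
    (z : Fin n → ℂ) :
    z ∈ LinearMap.ker (leftMul n hn α ^ k) ↔
      ∀ j : Fin n, (j.1 + k ≤ n - 4 ∨ (k = 1 ∧ j.1 = n - 3)) → z j = 0 := by
  rw [LinearMap.mem_ker]
  constructor
  · intro h j hj
    have h1 := congrFun h ⟨j.1 + k, by omega⟩
    rw [leftMul_pow_apply n hn α k hk, if_pos (by simp; omega)] at h1
    simpa using h1
  · intro h
    ext m
    rw [leftMul_pow_apply n hn α k hk]
    split_ifs with hm
    · exact h _ (by simp; omega)
    · rfl

/-- The number of coordinates left free on `ker L^k`. -/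
theorem card_free_coords (n : ℕ) (hn : 7 ≤ n) (k : ℕ) (hk : 1 ≤ k) :
    Fintype.card {j : Fin n // ¬ (j.1 + k ≤ n - 4 ∨ (k = 1 ∧ j.1 = n - 3))} =
      min k (n - 3) + min k 2 + 1 := by
  rw [Fintype.card_subtype]
  by_cases h : k = 1
  · have : (Finset.univ.filter fun j : Fin n => ¬ (j.1 + k ≤ n - 4 ∨ (k = 1 ∧ j.1 = n - 3))) =
        (Finset.Ici (⟨n - 4, by omega⟩ : Fin n)).erase ⟨n - 3, by omega⟩ := by
      ext j
      simp [Fin.ext_iff, Fin.le_def]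
      omega
    rw [this, Finset.card_erase_of_mem (by simp [Fin.le_def]; omega), Fin.card_Ici]
    simp
    omega
  · have : (Finset.univ.filter fun j : Fin n => ¬ (j.1 + k ≤ n - 4 ∨ (k = 1 ∧ j.1 = n - 3))) =
        Finset.Ici (⟨n - 3 - k, by omega⟩ : Fin n) := by
      ext j
      simp [Fin.le_def]
      omega
    rw [this, Fin.card_Ici]
    simp
    omega

theorem finrank_ker_leftMul_pow (n : ℕ) (hn : 7 ≤ n) (α : Fin 6 → ℂ) (k : ℕ) (hk : 1 ≤ k) :
    Module.finrank ℂ (LinearMap.ker (leftMul n hn α ^ k)) = min k (n - 3) + min k 2 + 1 := by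
  have hker : LinearMap.ker (leftMul n hn α ^ k) =
      ⨅ j ∈ {j : Fin n | j.1 + k ≤ n - 4 ∨ (k = 1 ∧ j.1 = n - 3)},
        LinearMap.ker (LinearMap.proj j : (Fin n → ℂ) →ₗ[ℂ] ℂ) := by
    ext z
    rw [mem_ker_leftMul_pow n hn α k hk]
    simp [Submodule.mem_iInf]
  rw [hker, ← card_free_coords n hn k hk]
  have e := LinearMap.iInfKerProjEquiv ℂ (fun _ : Fin n => ℂ)
    (I := {j : Fin n | ¬ (j.1 + k ≤ n - 4 ∨ (k = 1 ∧ j.1 = n - 3))})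
    (J := {j : Fin n | j.1 + k ≤ n - 4 ∨ (k = 1 ∧ j.1 = n - 3)})
    (Set.disjoint_left.2 fun j h h' => h h')
    (fun j _ => (em _).symm)
  rw [e.finrank_eq]
  exact Module.finrank_fintype_fun_eq_card ℂ

/-- For `n ≥ 7` and any `α ∈ ℂ⁶`, the left-multiplication operator
`L = L_{e₁}` of `A(α₁,…,α₆)` is nilpotent of Jordan type `(n-3, 2, 1)`:
`dim ker L^k = min(k, n-3) + min(k, 2) + 1` for every `k ≥ 1`; in particular
`L^{n-3} = 0`, `L^{n-4} ≠ 0` and `dim ker L = 3`. -/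
theorem left_mult_jordan_type (n : ℕ) (hn : 7 ≤ n) (α : Fin 6 → ℂ) :
    ∃ L : Module.End ℂ (Fin n → ℂ),
      (∀ z : Fin n → ℂ, L z = Amul n α (bvec n 0 (by omega)) z) ∧
      (∀ k : ℕ, 1 ≤ k →
        Module.finrank ℂ (LinearMap.ker (L ^ k)) = min k (n - 3) + min k 2 + 1) ∧
      L ^ (n - 3) = 0 ∧
      L ^ (n - 4) ≠ 0 ∧
      Module.finrank ℂ (LinearMap.ker L) = 3 := by
  refine ⟨leftMul n hn α, fun z => rfl, finrank_ker_leftMul_pow n hn α, ?_, ?_, ?_⟩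
  · refine LinearMap.ext fun z => funext fun m => ?_
    rw [leftMul_pow_apply n hn α _ (by omega), if_neg (by omega)]
    rfl
  · -- The kernel has dimension `n - 1`, whereas that of the zero map has dimension `n`.
    intro h
    have h1 := finrank_ker_leftMul_pow n hn α (n - 4) (by omega)
    rw [h, LinearMap.ker_zero, finrank_top, Module.finrank_fin_fun] at h1
    omega
  · have h1 := finrank_ker_leftMul_pow n hn α 1 le_rfl
    rw [pow_one] at h1
    omega
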